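/- arXiv:2402.04550 — 3 statements merged into one kernel-verified Lean document; each statement's English description precedes it below -/
import Mathlib

section
/- Let (Ω,P) be a probability space, Y : Ω → ℝ an integrable random variable, B a measurable event, and a ∈ ℝ such that P(B) = P(Y > a). Then E[Y·1_B] ≤ E[Y·1_{Y>a}]; that is, among all events of the same probability, the upper level set of Y maximizes the truncated expectation. -/
/-!
The integral of an integrable function over a set is largest on the set where the function is
positive. Applied to `f - a`, this says that the integral of `f` over `{x | a < f x}` exceeds the
one over `s` by at least `a` times the difference of the measures of the two sets.
-/

open MeasureTheory

section LevelSet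

variable {α : Type*} [MeasurableSpace α] {μ : Measure α} {f : α → ℝ}

lemma integral_posPart_eq_setIntegral (hf : AEMeasurable f μ) :
    ∫ x, (f x)⁺ ∂μ = ∫ x in {x | 0 < f x}, f x ∂μ := by
  have hpos : NullMeasurableSet {x | 0 < f x} μ := nullMeasurableSet_lt aemeasurable_const hf
  rw [← integral_indicator₀ hpos]
  congr with x
  simp only [Set.indicator_apply, Set.mem_ofPred_eq]
  split_ifs with hx
  · exact posPart_of_nonneg hx.le
  · exact posPart_of_nonpos (not_lt.mp hx)

lemma setIntegral_le_setIntegral_pos {s : Set α} (hs : IntegrableOn f s μ)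
    (hpos : IntegrableOn f {x | 0 < f x} μ) :
    ∫ x in s, f x ∂μ ≤ ∫ x in {x | 0 < f x}, f x ∂μ := by
  let t := s ∪ {x | 0 < f x}
  have ht : IntegrableOn f t μ := hs.union hpos
  calc ∫ x in s, f x ∂μ
      ≤ ∫ x in s, (f x)⁺ ∂μ := integral_mono hs hs.pos_part fun x ↦ le_posPart (f x)
    _ ≤ ∫ x in t, (f x)⁺ ∂μ := setIntegral_mono_set ht.pos_part
        (ae_of_all _ fun x ↦ posPart_nonneg (f x)) Set.subset_union_left.eventuallyLE
    _ = ∫ x in {x | 0 < f x}, f x ∂μ := by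
        -- `f` need not be a.e.-measurable for `μ`, but it is for `μ.restrict t`.
        rw [integral_posPart_eq_setIntegral ht.aemeasurable,
          Measure.restrict_restrict_of_subset Set.subset_union_right]

lemma setIntegral_sub_const {E : Type*} [NormedAddCommGroup E] [NormedSpace ℝ E]
    [CompleteSpace E] {g : α → E} {s : Set α} (hg : IntegrableOn g s μ) (hs : μ s ≠ ⊤) (c : E) :
    ∫ x in s, (g x - c) ∂μ = ∫ x in s, g x ∂μ - μ.real s • c := by
  rw [integral_sub hg (integrableOn_const hs), setIntegral_const]

lemma measureReal_sub_mul_le_setIntegral_sub {s : Set α} {a : ℝ} (hfs : IntegrableOn f s μ)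
    (hfa : IntegrableOn f {x | a < f x} μ) (hs : μ s ≠ ⊤) (ha : μ {x | a < f x} ≠ ⊤) :
    (μ.real {x | a < f x} - μ.real s) * a ≤
      ∫ x in {x | a < f x}, f x ∂μ - ∫ x in s, f x ∂μ := by
  have hpos : {x | 0 < f x - a} = {x | a < f x} := by simp only [sub_pos]
  have hshift : ∫ x in s, (f x - a) ∂μ ≤ ∫ x in {x | a < f x}, (f x - a) ∂μ :=
    hpos ▸ setIntegral_le_setIntegral_pos (hfs.sub (integrableOn_const hs))
      (hpos.symm ▸ hfa.sub (integrableOn_const ha))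
  rw [setIntegral_sub_const hfs hs, setIntegral_sub_const hfa ha, smul_eq_mul, smul_eq_mul]
    at hshift
  linarith

theorem setIntegral_le_setIntegral_upperLevelSet_general {s : Set α} {a : ℝ}
    (hfs : IntegrableOn f s μ) (hfa : IntegrableOn f {x | a < f x} μ)
    (hs : μ s ≠ ⊤) (hsa : μ s = μ {x | a < f x}) :
    ∫ x in s, f x ∂μ ≤ ∫ x in {x | a < f x}, f x ∂μ := by
  have hreal : μ.real s = μ.real {x | a < f x} := congrArg ENNReal.toReal hsa
  have hgain := measureReal_sub_mul_le_setIntegral_sub hfs hfa hs (hsa ▸ hs)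
  rwa [hreal, sub_self, zero_mul, sub_nonneg] at hgain

end LevelSet

/-- Among all events of a fixed probability, the upper level set of `Y`
maximizes the truncated expectation: if `P(B) = P(Y > a)` then
`E[Y·1_B] ≤ E[Y·1_{Y > a}]`. -/
theorem setIntegral_le_setIntegral_upperLevelSet
    {Ω : Type*} [MeasurableSpace Ω] (P : Measure Ω) [IsProbabilityMeasure P]
    (Y : Ω → ℝ) (hYint : Integrable Y P) (hYm : Measurable Y)
    (B : Set Ω) (hB : MeasurableSet B) (a : ℝ)
    (hPB : P B = P {ω | a < Y ω}) :
    ∫ ω in B, Y ω ∂P ≤ ∫ ω in {ω | a < Y ω}, Y ω ∂P :=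
  setIntegral_le_setIntegral_upperLevelSet_general hYint.integrableOn hYint.integrableOn
    (measure_ne_top P B) hPB
end

section
/- Let n ≥ 1, y : Fin n → ℝ, and let S, T ⊆ Fin n with |S| = |T| = m and 0 < m < n. If |Σ_{i∈S}(y_i − ȳ)| ≤ |Σ_{i∈T}(y_i − ȳ)|, where ȳ is the overall mean, then the empirical variance reductions satisfy Δ(S) ≤ Δ(T). -/
/-- Arithmetic mean of `y` over the index set `S` (equal to `0` when `S = ∅`). -/
noncomputable def finsetMean {n : ℕ} (y : Fin n → ℝ) (S : Finset (Fin n)) : ℝ :=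
  (∑ i ∈ S, y i) / S.card

/-- Empirical variance reduction of the split `(S, Sᶜ)`. -/
noncomputable def empVarReduction {n : ℕ} (y : Fin n → ℝ) (S : Finset (Fin n)) : ℝ :=
  ∑ i, (y i - finsetMean y Finset.univ) ^ 2
    - ∑ i ∈ S, (y i - finsetMean y S) ^ 2
    - ∑ i ∈ Sᶜ, (y i - finsetMean y Sᶜ) ^ 2

/-!
Recentred at the overall mean `ȳ`, the sum of squares of a block `A` about its own mean is
`∑ i ∈ A, (y i - ȳ) ^ 2 - (∑ i ∈ A, (y i - ȳ)) ^ 2 / #A`. The sums of squares cancel in `Δ(S)`,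
and the deviations over `S` and `Sᶜ` add up to zero, so `Δ(S) = D ^ 2 * (1 / #S + 1 / #Sᶜ)` with
`D = ∑ i ∈ S, (y i - ȳ)`. For a fixed block size this is increasing in `|D|`.
-/

open Finset
open scoped BigOperators

section Expect

variable {ι K : Type*} [Field K] [CharZero K]

theorem sum_sub_expect_sq (s : Finset ι) (f : ι → K) :
    ∑ i ∈ s, (f i - 𝔼 j ∈ s, f j) ^ 2 = ∑ i ∈ s, f i ^ 2 - (∑ i ∈ s, f i) ^ 2 / #s := by
  obtain rfl | hs := s.eq_empty_or_nonempty
  · simp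
  have card_ne_zero : (#s : K) ≠ 0 := by exact_mod_cast hs.card_ne_zero
  have expand (a : K) :
      ∑ i ∈ s, (f i - a) ^ 2 = ∑ i ∈ s, f i ^ 2 - 2 * (∑ i ∈ s, f i) * a + #s * a ^ 2 := by
    simp only [sub_sq, sum_add_distrib, sum_sub_distrib, sum_const, nsmul_eq_mul, mul_sum, sum_mul]
  rw [expand, expect_eq_sum_div_card]
  field_simp
  ring

theorem sum_sub_expect_sq_eq_sum_sub_sq (s : Finset ι) (f : ι → K) (c : K) :
    ∑ i ∈ s, (f i - 𝔼 j ∈ s, f j) ^ 2 =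
      ∑ i ∈ s, (f i - c) ^ 2 - (∑ i ∈ s, (f i - c)) ^ 2 / #s := by
  obtain rfl | hs := s.eq_empty_or_nonempty
  · simp
  have expect_shift : 𝔼 j ∈ s, (f j - c) = 𝔼 j ∈ s, f j - c := by
    rw [expect_sub_distrib, expect_const hs]
  simpa only [expect_shift, sub_sub_sub_cancel_right] using sum_sub_expect_sq s fun i ↦ f i - c

theorem sum_compl_sub_expect [Fintype ι] [DecidableEq ι] (s : Finset ι) (f : ι → K) :
    ∑ i ∈ sᶜ, (f i - 𝔼 j, f j) = -∑ i ∈ s, (f i - 𝔼 j, f j) := by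
  have sum_deviation : ∑ i, (f i - 𝔼 j, f j) = 0 := Fintype.sum_balance f
  rw [← sum_add_sum_compl s] at sum_deviation
  exact eq_neg_of_add_eq_zero_right sum_deviation

end Expect

section EmpVarReduction

variable {n : ℕ} (y : Fin n → ℝ) (S : Finset (Fin n))

theorem finsetMean_eq_expect : finsetMean y S = 𝔼 i ∈ S, y i :=
  (expect_eq_sum_div_card S y).symm

theorem empVarReduction_eq_sq_mul :
    empVarReduction y S =
      (∑ i ∈ S, (y i - finsetMean y univ)) ^ 2 * (1 / (#S : ℝ) + 1 / (#Sᶜ : ℝ)) := by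
  simp only [empVarReduction, finsetMean_eq_expect]
  rw [sum_sub_expect_sq_eq_sum_sub_sq S y (𝔼 i, y i),
    sum_sub_expect_sq_eq_sum_sub_sq Sᶜ y (𝔼 i, y i), sum_compl_sub_expect,
    ← sum_add_sum_compl S fun i ↦ (y i - 𝔼 j, y j) ^ 2]
  ring

end EmpVarReduction

/-- Among splits of a fixed size `m`, the empirical variance reduction is a
monotone function of `|Σ_{i∈S}(y_i − ȳ)|`. -/
theorem empVarReduction_mono {n : ℕ} (hn : 1 ≤ n) (y : Fin n → ℝ)
    (S T : Finset (Fin n)) (m : ℕ)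
    (hSm : S.card = m) (hTm : T.card = m) (hm0 : 0 < m) (hmn : m < n)
    (hle : |∑ i ∈ S, (y i - finsetMean y Finset.univ)|
        ≤ |∑ i ∈ T, (y i - finsetMean y Finset.univ)|) :
    empVarReduction y S ≤ empVarReduction y T := by
  have card_eq : #S = #T := hSm.trans hTm.symm
  have card_compl_eq : #Sᶜ = #Tᶜ := by rw [card_compl, card_compl, card_eq]
  rw [empVarReduction_eq_sq_mul, empVarReduction_eq_sq_mul, card_eq, card_compl_eq]
  exact mul_le_mul_of_nonneg_right (sq_le_sq.mpr hle) (by positivity)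
end

section
/- Let n ≥ 1 and y : Fin n → ℝ. For every subset S ⊆ Fin n there exists a threshold a ∈ ℝ such that the split of indices by the response threshold, T_a = {i : y_i > a}, satisfies Δ(T_a) ≥ Δ(S). Consequently, for data points (x_i, y_i) the optimal CART impurity decrease over response-threshold (Lebesgue) splits is at least the optimal impurity decrease over covariate-threshold (Riemann) splits, since every covariate split induces some subset S of indices. -/
/-!
The argument is one iteration of Lloyd's algorithm for two clusters. For fixed centers `p` and `q`
the cost of assigning `S` to `p` and `Sᶜ` to `q` is smallest when every response goes to its
nearest center, and on the line this is the cut at the midpoint of `p` and `q`. Starting from the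
means of the two cells of `S`, the cut does not increase the cost, and replacing the centers by
the means of the new cells does not increase it either.
-/

theorem sum_sub_sq_eq_add_card_mul_sq {ι R : Type*} [CommRing R] (s : Finset ι) (f : ι → R)
    {m : R} (hm : ∑ i ∈ s, f i = s.card * m) (c : R) :
    ∑ i ∈ s, (f i - c) ^ 2 = ∑ i ∈ s, (f i - m) ^ 2 + s.card * (m - c) ^ 2 := by
  have cross : ∑ i ∈ s, (f i - m) = 0 := by
    rw [Finset.sum_sub_distrib, hm, Finset.sum_const, nsmul_eq_mul, sub_self]
  calc ∑ i ∈ s, (f i - c) ^ 2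
      = ∑ i ∈ s, ((f i - m) ^ 2 + (f i - m) * (2 * (m - c)) + (m - c) ^ 2) :=
        Finset.sum_congr rfl fun i _ => by ring
    _ = ∑ i ∈ s, (f i - m) ^ 2 + s.card * (m - c) ^ 2 := by
        rw [Finset.sum_add_distrib, Finset.sum_add_distrib, ← Finset.sum_mul, cross, zero_mul,
          add_zero, Finset.sum_const, nsmul_eq_mul]

theorem sum_add_sum_compl_le_of_forall_le {ι M : Type*} [Fintype ι] [DecidableEq ι]
    [AddCommMonoid M] [Preorder M] [IsOrderedAddMonoid M] {f g : ι → M} {T : Finset ι}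
    (hfg : ∀ i ∈ T, f i ≤ g i) (hgf : ∀ i ∉ T, g i ≤ f i) (S : Finset ι) :
    ∑ i ∈ T, f i + ∑ i ∈ Tᶜ, g i ≤ ∑ i ∈ S, f i + ∑ i ∈ Sᶜ, g i := by
  have sum_piecewise_univ (U : Finset ι) :
      ∑ i ∈ U, f i + ∑ i ∈ Uᶜ, g i = ∑ i, U.piecewise f g i := by
    rw [Finset.sum_piecewise, Finset.univ_inter, Finset.compl_eq_univ_sdiff]
  rw [sum_piecewise_univ, sum_piecewise_univ]
  refine Finset.sum_le_sum fun i _ => ?_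
  by_cases hT : i ∈ T <;> by_cases hS : i ∈ S <;> simp [hT, hS, hfg, hgf]

theorem sub_sq_le_sub_sq_of_add_le_two_mul {R : Type*} [CommRing R] [PartialOrder R]
    [IsOrderedRing R] {p q x : R} (hqp : q ≤ p) (hx : p + q ≤ 2 * x) :
    (x - p) ^ 2 ≤ (x - q) ^ 2 := by
  have factor : (x - q) ^ 2 - (x - p) ^ 2 = (p - q) * (2 * x - (p + q)) := by ring
  exact sub_nonneg.1 (factor ▸ mul_nonneg (sub_nonneg.2 hqp) (sub_nonneg.2 hx))

theorem sub_sq_le_sub_sq_of_two_mul_le_add {R : Type*} [CommRing R] [PartialOrder R]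
    [IsOrderedRing R] {p q x : R} (hqp : q ≤ p) (hx : 2 * x ≤ p + q) :
    (x - q) ^ 2 ≤ (x - p) ^ 2 := by
  have factor : (x - p) ^ 2 - (x - q) ^ 2 = (p - q) * (p + q - 2 * x) := by ring
  exact sub_nonneg.1 (factor ▸ mul_nonneg (sub_nonneg.2 hqp) (sub_nonneg.2 hx))

/-- The two-means clustering cost: the sum of squared distances when the points of `S` are assigned
to the center `p` and all other points to the center `q`. -/
def twoCenterCost {ι R : Type*} [Fintype ι] [DecidableEq ι] [CommRing R] (y : ι → R)
    (S : Finset ι) (p q : R) : R :=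
  ∑ i ∈ S, (y i - p) ^ 2 + ∑ i ∈ Sᶜ, (y i - q) ^ 2

theorem twoCenterCost_le_of_midpoint_cut {ι R : Type*} [Fintype ι] [DecidableEq ι] [CommRing R]
    [PartialOrder R] [IsOrderedRing R] {y : ι → R} {T : Finset ι} {p q : R} (hqp : q ≤ p)
    (hT : ∀ i ∈ T, p + q ≤ 2 * y i) (hTc : ∀ i ∉ T, 2 * y i ≤ p + q) (S : Finset ι) :
    twoCenterCost y T p q ≤ twoCenterCost y S p q :=
  sum_add_sum_compl_le_of_forall_le (fun i hi => sub_sq_le_sub_sq_of_add_le_two_mul hqp (hT i hi))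
    (fun i hi => sub_sq_le_sub_sq_of_two_mul_le_add hqp (hTc i hi)) S

section EmpiricalMean

variable {n : ℕ} (y : Fin n → ℝ) (S : Finset (Fin n))

theorem sum_eq_card_mul_finsetMean : ∑ i ∈ S, y i = S.card * finsetMean y S := by
  refine (mul_div_cancel_of_imp' fun hcard => ?_).symm
  rw [Finset.card_eq_zero.1 (Nat.cast_eq_zero.1 hcard), Finset.sum_empty]

theorem sum_sub_finsetMean_sq_le (c : ℝ) :
    ∑ i ∈ S, (y i - finsetMean y S) ^ 2 ≤ ∑ i ∈ S, (y i - c) ^ 2 := by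
  rw [sum_sub_sq_eq_add_card_mul_sq S y (sum_eq_card_mul_finsetMean y S) c]
  exact le_add_of_nonneg_right (by positivity)

theorem twoCenterCost_finsetMean_le (p q : ℝ) :
    twoCenterCost y S (finsetMean y S) (finsetMean y Sᶜ) ≤ twoCenterCost y S p q :=
  add_le_add (sum_sub_finsetMean_sq_le y S p) (sum_sub_finsetMean_sq_le y Sᶜ q)

theorem empVarReduction_eq_sub_twoCenterCost :
    empVarReduction y S = ∑ i, (y i - finsetMean y Finset.univ) ^ 2
      - twoCenterCost y S (finsetMean y S) (finsetMean y Sᶜ) :=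
  sub_sub _ _ _

theorem empVarReduction_compl : empVarReduction y Sᶜ = empVarReduction y S := by
  rw [empVarReduction, empVarReduction, compl_compl, sub_right_comm]

variable {y S} in
theorem empVarReduction_le_of_twoCenterCost_le {T : Finset (Fin n)} {p q : ℝ}
    (h : twoCenterCost y T p q ≤ twoCenterCost y S (finsetMean y S) (finsetMean y Sᶜ)) :
    empVarReduction y S ≤ empVarReduction y T := by
  rw [empVarReduction_eq_sub_twoCenterCost, empVarReduction_eq_sub_twoCenterCost]
  exact sub_le_sub_left ((twoCenterCost_finsetMean_le y T p q).trans h) _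

variable {y S} in
theorem empVarReduction_le_midpoint_threshold (h : finsetMean y Sᶜ ≤ finsetMean y S) :
    empVarReduction y S ≤ empVarReduction y
      (Finset.univ.filter fun i => (finsetMean y S + finsetMean y Sᶜ) / 2 < y i) := by
  refine empVarReduction_le_of_twoCenterCost_le (twoCenterCost_le_of_midpoint_cut h ?_ ?_ S)
  · intro i hi
    linarith [(Finset.mem_filter.1 hi).2]
  · intro i hi
    have : y i ≤ (finsetMean y S + finsetMean y Sᶜ) / 2 := by simpa using hi
    linarith

end EmpiricalMean

/-- For every subset `S` of indices there is a response threshold `a` such that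
the Lebesgue split `{i : y i > a}` achieves at least as large an empirical
variance reduction as the split `(S, Sᶜ)`. -/
theorem exists_response_threshold_split {n : ℕ} (hn : 1 ≤ n) (y : Fin n → ℝ)
    (S : Finset (Fin n)) :
    ∃ a : ℝ,
      empVarReduction y S ≤
        empVarReduction y (Finset.univ.filter (fun i => a < y i)) := by
  rcases le_total (finsetMean y Sᶜ) (finsetMean y S) with h | h
  · exact ⟨_, empVarReduction_le_midpoint_threshold h⟩
  · have hcompl := empVarReduction_le_midpoint_threshold (S := Sᶜ) (by rwa [compl_compl])
    exact ⟨_, (empVarReduction_compl y S).ge.trans hcompl⟩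
end
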